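/- arXiv:0812.0287 — 5 statements merged into one kernel-verified Lean document; each statement's English description precedes it below -/
import Mathlib

section
/- Let L : D → C and R : C → D be functors with an adjunction L ⊣ R, and let (T_D, η^D, μ^D) and (T_C, η^C, μ^C) be monads on D and C respectively. Suppose there is a natural isomorphism φ with components φ_X : T_D(R X) ≅ R(T_C X) (X an object of C) such that (unit compatibility) φ_X ∘ η^D_{R X} = R(η^C_X) for all X, and (multiplication compatibility) φ_X ∘ μ^D_{R X} = R(μ^C_X) ∘ φ_{T_C X} ∘ T_D(φ_X) for all X. Then there exists an adjunction L̄ ⊣ R̄ between the Kleisli categories, with L̄ : Kl(T_D) → Kl(T_C) and R̄ : Kl(T_C) → Kl(T_D), such that R̄ ∘ F_C is naturally isomorphic to F_D ∘ R and L̄ ∘ F_D is naturally isomorphic to F_C ∘ L, where F_D : D → Kl(T_D) and F_C : C → Kl(T_C) denote the free (Kleisli) functors. -/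
/-!
STATEMENT 0: (i) ⇒ (ii) of the lemma characterising when an adjunction commutes with a
pair of monads: a natural isomorphism `φ : T_D ∘ R ≅ R ∘ T_C` compatible with the units
and multiplications induces an adjunction between the Kleisli categories commuting with
the free functors up to natural isomorphism.
-/

open CategoryTheory

namespace CategoryTheory.Kleisli

universe v₁ v₂ u₁ u₂

variable {C : Type u₁} {D : Type u₂} [Category.{v₁} C] [Category.{v₂} D]
  {L : D ⥤ C} {R : C ⥤ D} {TD : Monad D} {TC : Monad C}

/-- The inverse of a monad-compatible isomorphism `R ⋙ TD ≅ TC ⋙ R` intertwines the Kleisli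
extensions of `g` and of its image under `R`. -/
lemma inv_app_comp_extend (φ : R ⋙ TD.toFunctor ≅ TC.toFunctor ⋙ R)
    (hmul : ∀ X : C, TD.μ.app (R.obj X) ≫ φ.hom.app X =
      TD.map (φ.hom.app X) ≫ φ.hom.app (TC.obj X) ≫ R.map (TC.μ.app X))
    {Y Z : C} (g : Y ⟶ TC.obj Z) :
    φ.inv.app Y ≫ TD.map (R.map g ≫ φ.inv.app Z) ≫ TD.μ.app (R.obj Z) =
      R.map (TC.map g ≫ TC.μ.app Z) ≫ φ.inv.app Z := by
  have hnat : TD.map (R.map g) ≫ φ.hom.app (TC.obj Z) = φ.hom.app Y ≫ R.map (TC.map g) :=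
    φ.hom.naturality g
  have hcancel : TD.map (φ.inv.app Z) ≫ TD.map (φ.hom.app Z) = 𝟙 _ := by
    rw [← Functor.map_comp, Iso.inv_hom_id_app, Functor.map_id]
  have hinv : φ.inv.app Y ≫ φ.hom.app Y = 𝟙 _ := φ.inv_hom_id_app Y
  have hinv' : φ.inv.app Z ≫ φ.hom.app Z = 𝟙 _ := φ.inv_hom_id_app Z
  rw [← cancel_mono (φ.hom.app Z)]
  simp only [Category.assoc, Functor.map_comp, hmul]
  rw [reassoc_of% hcancel, reassoc_of% hnat, reassoc_of% hinv, hinv']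
  exact (congrArg (R.map (TC.map g) ≫ ·) (Category.comp_id _)).symm

/-- The functor between Kleisli categories induced by `R` and a monad-compatible isomorphism
`R ⋙ TD ≅ TC ⋙ R`. -/
def mapOfIso (φ : R ⋙ TD.toFunctor ≅ TC.toFunctor ⋙ R)
    (hunit : ∀ X : C, TD.η.app (R.obj X) ≫ φ.hom.app X = R.map (TC.η.app X))
    (hmul : ∀ X : C, TD.μ.app (R.obj X) ≫ φ.hom.app X =
      TD.map (φ.hom.app X) ≫ φ.hom.app (TC.obj X) ≫ R.map (TC.μ.app X)) :
    Kleisli TC ⥤ Kleisli TD where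
  obj X := .mk TD (R.obj X.of)
  map {_ Y} f := .mk (R.map f.of ≫ φ.inv.app Y.of)
  map_id X := by
    ext
    change R.map (TC.η.app X.of) ≫ φ.inv.app X.of = TD.η.app (R.obj X.of)
    rw [← hunit, Category.assoc, Iso.hom_inv_id_app]
    exact Category.comp_id _
  map_comp {X Y Z} f g := by
    ext
    change R.map (f.of ≫ TC.map g.of ≫ TC.μ.app Z.of) ≫ φ.inv.app Z.of =
      (R.map f.of ≫ φ.inv.app Y.of) ≫ TD.map (R.map g.of ≫ φ.inv.app Z.of) ≫
        TD.μ.app (R.obj Z.of)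
    rw [Category.assoc, inv_app_comp_extend φ hmul, Functor.map_comp, Category.assoc]

section

variable (adj : L ⊣ R) (φ : R ⋙ TD.toFunctor ≅ TC.toFunctor ⋙ R)
  (hunit : ∀ X : C, TD.η.app (R.obj X) ≫ φ.hom.app X = R.map (TC.η.app X))
  (hmul : ∀ X : C, TD.μ.app (R.obj X) ≫ φ.hom.app X =
    TD.map (φ.hom.app X) ≫ φ.hom.app (TC.obj X) ≫ R.map (TC.μ.app X))

/-- `mapOfIso` extends `R` along the free functors. -/
def toKleisliCompMapOfIso :
    Adjunction.toKleisli TC ⋙ mapOfIso φ hunit hmul ≅ R ⋙ Adjunction.toKleisli TD :=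
  NatIso.ofComponents (fun _ => Iso.refl _) (fun {X Y} f => by
    refine (Category.comp_id _).trans (Eq.trans ?_ (Category.id_comp _).symm)
    ext
    change R.map (f ≫ TC.η.app Y) ≫ φ.inv.app Y = R.map f ≫ TD.η.app (R.obj Y)
    rw [Functor.map_comp, ← hunit, Category.assoc, Category.assoc, Iso.hom_inv_id_app]
    exact congrArg (R.map f ≫ ·) (Category.comp_id _))

/-- `mapOfIso` lifts `R` along the forgetful functors. -/
def mapOfIsoCompFromKleisli :
    Adjunction.fromKleisli TC ⋙ R ≅ mapOfIso φ hunit hmul ⋙ Adjunction.fromKleisli TD :=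
  NatIso.ofComponents (fun X => (φ.app X.of).symm)
    (fun f => (inv_app_comp_extend φ hmul f.of).symm)

/-- Kleisli morphisms `L X ⟶ Y` correspond to Kleisli morphisms `X ⟶ R Y`. -/
def mapOfIsoHomEquiv (X : Kleisli TD) (Y : Kleisli TC) :
    (Kleisli.mk TC (L.obj X.of) ⟶ Y) ≃ (X ⟶ (mapOfIso φ hunit hmul).obj Y) where
  toFun f := .mk (adj.homEquiv X.of (TC.obj Y.of) f.of ≫ φ.inv.app Y.of)
  invFun g := .mk ((adj.homEquiv X.of (TC.obj Y.of)).symm (g.of ≫ φ.hom.app Y.of))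
  left_inv f := by
    ext
    change (adj.homEquiv X.of (TC.obj Y.of)).symm
      ((adj.homEquiv X.of (TC.obj Y.of) f.of ≫ φ.inv.app Y.of) ≫ φ.hom.app Y.of) = f.of
    rw [Equiv.symm_apply_eq, Category.assoc, Iso.inv_hom_id_app]
    exact Category.comp_id _
  right_inv g := by
    ext
    change adj.homEquiv X.of (TC.obj Y.of) ((adj.homEquiv X.of (TC.obj Y.of)).symm
      (g.of ≫ φ.hom.app Y.of)) ≫ φ.inv.app Y.of = g.of
    rw [Equiv.apply_symm_apply]
    exact (Category.assoc _ _ _).trans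
      ((congrArg (g.of ≫ ·) (φ.hom_inv_id_app Y.of)).trans (Category.comp_id _))

lemma mapOfIsoHomEquiv_naturality (X : Kleisli TD) (Y Z : Kleisli TC) (g : Y ⟶ Z)
    (h : Kleisli.mk TC (L.obj X.of) ⟶ Y) :
    mapOfIsoHomEquiv adj φ hunit hmul X Z (h ≫ g) =
      mapOfIsoHomEquiv adj φ hunit hmul X Y h ≫ (mapOfIso φ hunit hmul).map g := by
  ext
  change adj.homEquiv X.of (TC.obj Z.of) (h.of ≫ TC.map g.of ≫ TC.μ.app Z.of) ≫
      φ.inv.app Z.of =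
    (adj.homEquiv X.of (TC.obj Y.of) h.of ≫ φ.inv.app Y.of) ≫
      TD.map (R.map g.of ≫ φ.inv.app Z.of) ≫ TD.μ.app (R.obj Z.of)
  rw [Category.assoc, inv_app_comp_extend φ hmul,
    CategoryTheory.Adjunction.homEquiv_naturality_right, Category.assoc]

/-- The left adjoint of `mapOfIso`, given on objects by `L`. -/
def leftAdjointMapOfIso : Kleisli TD ⥤ Kleisli TC :=
  CategoryTheory.Adjunction.leftAdjointOfEquiv (mapOfIsoHomEquiv adj φ hunit hmul)
    (mapOfIsoHomEquiv_naturality adj φ hunit hmul)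

/-- The adjunction between Kleisli categories induced by `L ⊣ R` and a monad-compatible
isomorphism `R ⋙ TD ≅ TC ⋙ R`. -/
def adjunctionMapOfIso :
    leftAdjointMapOfIso adj φ hunit hmul ⊣ mapOfIso φ hunit hmul :=
  CategoryTheory.Adjunction.adjunctionOfEquivLeft (mapOfIsoHomEquiv adj φ hunit hmul)
    (mapOfIsoHomEquiv_naturality adj φ hunit hmul)

/-- `leftAdjointMapOfIso` extends `L` along the free functors, since both composites are left
adjoint to the same functor. -/
def toKleisliCompLeftAdjointMapOfIso :
    Adjunction.toKleisli TD ⋙ leftAdjointMapOfIso adj φ hunit hmul ≅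
      L ⋙ Adjunction.toKleisli TC :=
  ((Adjunction.adj TD).comp (adjunctionMapOfIso adj φ hunit hmul)).leftAdjointUniq
    ((adj.comp (Adjunction.adj TC)).ofNatIsoRight (mapOfIsoCompFromKleisli φ hunit hmul))

end

end CategoryTheory.Kleisli

theorem stmt0 {C : Type*} {D : Type*} [Category C] [Category D]
    (L : D ⥤ C) (R : C ⥤ D) (adj : L ⊣ R)
    (TD : Monad D) (TC : Monad C)
    (φ : R ⋙ TD.toFunctor ≅ TC.toFunctor ⋙ R)
    (hunit : ∀ X : C, TD.η.app (R.obj X) ≫ φ.hom.app X = R.map (TC.η.app X))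
    (hmul : ∀ X : C, TD.μ.app (R.obj X) ≫ φ.hom.app X =
      TD.map (φ.hom.app X) ≫ φ.hom.app (TC.obj X) ≫ R.map (TC.μ.app X)) :
    ∃ (Lbar : Kleisli TD ⥤ Kleisli TC) (Rbar : Kleisli TC ⥤ Kleisli TD),
      Nonempty (Lbar ⊣ Rbar) ∧
      Nonempty ((Kleisli.Adjunction.toKleisli TC ⋙ Rbar) ≅
        (R ⋙ Kleisli.Adjunction.toKleisli TD)) ∧
      Nonempty ((Kleisli.Adjunction.toKleisli TD ⋙ Lbar) ≅
        (L ⋙ Kleisli.Adjunction.toKleisli TC)) := by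
  exact ⟨Kleisli.leftAdjointMapOfIso adj φ hunit hmul, Kleisli.mapOfIso φ hunit hmul,
    ⟨Kleisli.adjunctionMapOfIso adj φ hunit hmul⟩,
    ⟨Kleisli.toKleisliCompMapOfIso φ hunit hmul⟩,
    ⟨Kleisli.toKleisliCompLeftAdjointMapOfIso adj φ hunit hmul⟩⟩
end

section
/- Let L : D → C and R : C → D be functors with an adjunction L ⊣ R. Let (T_a^C, η^{aC}, μ^{aC}) and (T_b^C, η^{bC}, μ^{bC}) be monads on C commuting via a natural isomorphism ψ^C : T_a^C T_b^C → T_b^C T_a^C, and let (T_a^D, η^{aD}, μ^{aD}) and (T_b^D, η^{bD}, μ^{bD}) be monads on D commuting via ψ^D : T_a^D T_b^D → T_b^D T_a^D (each pair satisfying the four commuting-monad axioms). Suppose given natural isomorphisms φ_a with components T_a^D(R X) ≅ R(T_a^C X) and φ_b with components T_b^D(R X) ≅ R(T_b^C X), each compatible with the units and multiplications of the respective monads (i.e. (φ_a)_X ∘ η^{aD}_{R X} = R(η^{aC}_X) and (φ_a)_X ∘ μ^{aD}_{R X} = R(μ^{aC}_X) ∘ (φ_a)_{T_a^C X} ∘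 T_a^D((φ_a)_X), and likewise for φ_b). Define φ_{ab} with components T_a^D T_b^D (R X) → R(T_a^C T_b^C X) as (φ_a)_{T_b^C X} ∘ T_a^D((φ_b)_X), and φ_{ba} analogously as (φ_b)_{T_a^C X} ∘ T_b^D((φ_a)_X). Assume the coherence condition R(ψ^C_X) ∘ (φ_{ab})_X = (φ_{ba})_X ∘ ψ^D_{R X} for all objects X of C. Then φ_{ab} is a natural isomorphism from T_a^D T_b^D ∘ R to R ∘ T_a^C T_b^C that is compatible with the units and multiplications of the composite monads T_a^D T_b^D on D and T_a^C T_b^C on C (with composite monad structures as in the composite-monad construction). -/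
/-!
STATEMENT 3: If two commuting pairs of monads (on `C` and on `D`) both commute with an
adjunction `L ⊣ R` via natural isomorphisms `φ_a`, `φ_b` compatible with units and
multiplications, and the coherence condition relating `φ_a`, `φ_b`, `ψ^C`, `ψ^D` holds,
then the composite `φ_ab` is a natural isomorphism `T_a^D T_b^D ∘ R ≅ R ∘ T_a^C T_b^C`
compatible with the units and multiplications of the composite monads.
-/

open CategoryTheory

/-- The unit `X ⟶ T_a (T_b X)` of the composite monad: `(T_a ▷ η^b) ∘ η^a`. -/
def compUnitApp {C : Type*} [Category C] (Ta Tb : Monad C) (X : C) :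
    X ⟶ Ta.obj (Tb.obj X) :=
  Ta.η.app X ≫ Ta.map (Tb.η.app X)

/-- The multiplication `T_a T_b T_a T_b X ⟶ T_a T_b X` of the composite monad:
`(μ^a ◁ T_b) ∘ (T_a T_a ▷ μ^b) ∘ (T_a ▷ ψ ◁ T_b)`, the middle interchange being given by
the (inverse of the) commutation isomorphism `ψ : T_a T_b ≅ T_b T_a`. -/
def compMulApp {C : Type*} [Category C] (Ta Tb : Monad C)
    (ψ : Tb.toFunctor ⋙ Ta.toFunctor ≅ Ta.toFunctor ⋙ Tb.toFunctor) (X : C) :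
    Ta.obj (Tb.obj (Ta.obj (Tb.obj X))) ⟶ Ta.obj (Tb.obj X) :=
  Ta.map (ψ.inv.app (Tb.obj X)) ≫ Ta.map (Ta.map (Tb.μ.app X)) ≫ Ta.μ.app (Tb.obj X)

theorem stmt3 {C : Type*} {D : Type*} [Category C] [Category D]
    (L : D ⥤ C) (R : C ⥤ D) (adj : L ⊣ R)
    (TaC TbC : Monad C) (TaD TbD : Monad D)
    (ψC : TbC.toFunctor ⋙ TaC.toFunctor ≅ TaC.toFunctor ⋙ TbC.toFunctor)
    (ψD : TbD.toFunctor ⋙ TaD.toFunctor ≅ TaD.toFunctor ⋙ TbD.toFunctor)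
    -- the pair of monads on C commutes via ψC
    (hC1 : ∀ X : C, TaC.map (TbC.η.app X) ≫ ψC.hom.app X = TbC.η.app (TaC.obj X))
    (hC2 : ∀ X : C, TaC.η.app (TbC.obj X) ≫ ψC.hom.app X = TbC.map (TaC.η.app X))
    (hC3 : ∀ X : C, TaC.μ.app (TbC.obj X) ≫ ψC.hom.app X =
      TaC.map (ψC.hom.app X) ≫ ψC.hom.app (TaC.obj X) ≫ TbC.map (TaC.μ.app X))
    (hC4 : ∀ X : C, TaC.map (TbC.μ.app X) ≫ ψC.hom.app X =
      ψC.hom.app (TbC.obj X) ≫ TbC.map (ψC.hom.app X) ≫ TbC.μ.app (TaC.obj X))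
    -- the pair of monads on D commutes via ψD
    (hD1 : ∀ X : D, TaD.map (TbD.η.app X) ≫ ψD.hom.app X = TbD.η.app (TaD.obj X))
    (hD2 : ∀ X : D, TaD.η.app (TbD.obj X) ≫ ψD.hom.app X = TbD.map (TaD.η.app X))
    (hD3 : ∀ X : D, TaD.μ.app (TbD.obj X) ≫ ψD.hom.app X =
      TaD.map (ψD.hom.app X) ≫ ψD.hom.app (TaD.obj X) ≫ TbD.map (TaD.μ.app X))
    (hD4 : ∀ X : D, TaD.map (TbD.μ.app X) ≫ ψD.hom.app X =
      ψD.hom.app (TbD.obj X) ≫ TbD.map (ψD.hom.app X) ≫ TbD.μ.app (TaD.obj X))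
    -- both monad pairs commute with the adjunction, via φa and φb
    (φa : R ⋙ TaD.toFunctor ≅ TaC.toFunctor ⋙ R)
    (φb : R ⋙ TbD.toFunctor ≅ TbC.toFunctor ⋙ R)
    (hφaη : ∀ X : C, TaD.η.app (R.obj X) ≫ φa.hom.app X = R.map (TaC.η.app X))
    (hφaμ : ∀ X : C, TaD.μ.app (R.obj X) ≫ φa.hom.app X =
      TaD.map (φa.hom.app X) ≫ φa.hom.app (TaC.obj X) ≫ R.map (TaC.μ.app X))
    (hφbη : ∀ X : C, TbD.η.app (R.obj X) ≫ φb.hom.app X = R.map (TbC.η.app X))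
    (hφbμ : ∀ X : C, TbD.μ.app (R.obj X) ≫ φb.hom.app X =
      TbD.map (φb.hom.app X) ≫ φb.hom.app (TbC.obj X) ≫ R.map (TbC.μ.app X))
    -- coherence: R(ψ^C_X) ∘ (φ_ab)_X = (φ_ba)_X ∘ ψ^D_{R X}
    (hcoh : ∀ X : C,
      (TaD.map (φb.hom.app X) ≫ φa.hom.app (TbC.obj X)) ≫ R.map (ψC.hom.app X) =
        ψD.hom.app (R.obj X) ≫ TbD.map (φa.hom.app X) ≫ φb.hom.app (TaC.obj X)) :
    -- conclusion: φ_ab is a natural isomorphism compatible with the composite monad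
    -- structures
    ∃ Φ : R ⋙ TbD.toFunctor ⋙ TaD.toFunctor ≅ (TbC.toFunctor ⋙ TaC.toFunctor) ⋙ R,
      (∀ X : C, Φ.hom.app X = TaD.map (φb.hom.app X) ≫ φa.hom.app (TbC.obj X)) ∧
      (∀ X : C, compUnitApp TaD TbD (R.obj X) ≫ Φ.hom.app X =
        R.map (compUnitApp TaC TbC X)) ∧
      (∀ X : C, compMulApp TaD TbD ψD (R.obj X) ≫ Φ.hom.app X =
        TaD.map (TbD.map (Φ.hom.app X)) ≫ Φ.hom.app (TaC.obj (TbC.obj X)) ≫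
          R.map (compMulApp TaC TbC ψC X)) := by
  have coh_inv (X : C) : ψD.inv.app (R.obj X) ≫ TaD.map (φb.hom.app X) ≫
      φa.hom.app (TbC.obj X) =
        TbD.map (φa.hom.app X) ≫ φb.hom.app (TaC.obj X) ≫ R.map (ψC.inv.app X) := by
    have key := congrArg (fun f => ψD.inv.app (R.obj X) ≫ f ≫ R.map (ψC.inv.app X)) (hcoh X)
    have cancelD {Z : D} (f : TbD.obj (TaD.obj (R.obj X)) ⟶ Z) :
        ψD.inv.app (R.obj X) ≫ ψD.hom.app (R.obj X) ≫ f = f :=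
      ψD.inv_hom_id_app_assoc (R.obj X) f
    have cancelC : R.map (ψC.hom.app X) ≫ R.map (ψC.inv.app X) = 𝟙 _ := by
      rw [← R.map_comp, ψC.hom_inv_id_app, R.map_id]
    simp only [Category.assoc, cancelD] at key
    erw [cancelC, Category.comp_id] at key
    exact key
  have φa_nat {X Y : C} (f : X ⟶ Y) :
      TaD.map (R.map f) ≫ φa.hom.app Y = φa.hom.app X ≫ R.map (TaC.map f) :=
    φa.hom.naturality f
  have ψ_nat {X Y : D} (f : X ⟶ Y) :
      TbD.map (TaD.map f) ≫ ψD.inv.app Y = ψD.inv.app X ≫ TaD.map (TbD.map f) :=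
    ψD.inv.naturality f
  have μ_nat {X Y : D} (f : X ⟶ Y) :
      TaD.map (TaD.map f) ≫ TaD.μ.app Y = TaD.μ.app X ≫ TaD.map f :=
    TaD.μ.naturality f
  -- compatibility of `φ_ab` with the interchange followed by the multiplication of `T_b`
  have interchange (X : C) : ψD.inv.app (TbD.obj (R.obj X)) ≫ TaD.map (TbD.μ.app (R.obj X)) ≫
      TaD.map (φb.hom.app X) ≫ φa.hom.app (TbC.obj X) =
        TbD.map (TaD.map (φb.hom.app X)) ≫ TbD.map (φa.hom.app (TbC.obj X)) ≫
          φb.hom.app (TaC.obj (TbC.obj X)) ≫ R.map (ψC.inv.app (TbC.obj X)) ≫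
            R.map (TaC.map (TbC.μ.app X)) := by
    calc
      _ = ψD.inv.app (TbD.obj (R.obj X)) ≫ TaD.map (TbD.μ.app (R.obj X) ≫ φb.hom.app X) ≫
          φa.hom.app (TbC.obj X) := by
        rw [TaD.map_comp, Category.assoc]
      _ = (ψD.inv.app (TbD.obj (R.obj X)) ≫ TaD.map (TbD.map (φb.hom.app X))) ≫
          TaD.map (φb.hom.app (TbC.obj X)) ≫ TaD.map (R.map (TbC.μ.app X)) ≫
            φa.hom.app (TbC.obj X) := by
        rw [hφbμ, TaD.map_comp, TaD.map_comp]; simp only [Category.assoc]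
      _ = TbD.map (TaD.map (φb.hom.app X)) ≫ (ψD.inv.app (R.obj (TbC.obj X)) ≫
          TaD.map (φb.hom.app (TbC.obj X)) ≫ φa.hom.app (TbC.obj (TbC.obj X))) ≫
            R.map (TaC.map (TbC.μ.app X)) := by
        erw [φa_nat, ← ψ_nat]; simp only [Category.assoc]; rfl
      _ = _ := by
        rw [coh_inv]; simp only [Category.assoc]
  refine ⟨Functor.isoWhiskerRight φb TaD.toFunctor ≪≫
    Functor.isoWhiskerLeft TbC.toFunctor φa, ?_, ?_, ?_⟩
  · intro X
    rfl
  · intro X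
    change (TaD.η.app (R.obj X) ≫ TaD.map (TbD.η.app (R.obj X))) ≫
      TaD.map (φb.hom.app X) ≫ φa.hom.app (TbC.obj X) =
        R.map (TaC.η.app X ≫ TaC.map (TbC.η.app X))
    calc
      _ = TaD.η.app (R.obj X) ≫ TaD.map (TbD.η.app (R.obj X) ≫ φb.hom.app X) ≫
          φa.hom.app (TbC.obj X) := by
        rw [TaD.map_comp]; simp only [Category.assoc]
      _ = (TaD.η.app (R.obj X) ≫ φa.hom.app X) ≫ R.map (TaC.map (TbC.η.app X)) := by
        rw [hφbη]; erw [φa_nat]; rw [Category.assoc]; rfl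
      _ = _ := by
        rw [hφaη, R.map_comp]
  · intro X
    change (TaD.map (ψD.inv.app (TbD.obj (R.obj X))) ≫
      TaD.map (TaD.map (TbD.μ.app (R.obj X))) ≫ TaD.μ.app (TbD.obj (R.obj X))) ≫
        TaD.map (φb.hom.app X) ≫ φa.hom.app (TbC.obj X) =
      TaD.map (TbD.map (TaD.map (φb.hom.app X) ≫ φa.hom.app (TbC.obj X))) ≫
        (TaD.map (φb.hom.app (TaC.obj (TbC.obj X))) ≫
          φa.hom.app (TbC.obj (TaC.obj (TbC.obj X)))) ≫
        R.map (TaC.map (ψC.inv.app (TbC.obj X)) ≫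
          TaC.map (TaC.map (TbC.μ.app X)) ≫ TaC.μ.app (TbC.obj X))
    calc
      _ = TaD.map (ψD.inv.app (TbD.obj (R.obj X))) ≫
          TaD.map (TaD.map (TbD.μ.app (R.obj X))) ≫
          (TaD.μ.app (TbD.obj (R.obj X)) ≫ TaD.map (φb.hom.app X)) ≫
            φa.hom.app (TbC.obj X) := by
        simp only [Category.assoc]
      _ = TaD.map (ψD.inv.app (TbD.obj (R.obj X))) ≫
          TaD.map (TaD.map (TbD.μ.app (R.obj X))) ≫
          TaD.map (TaD.map (φb.hom.app X)) ≫
            TaD.μ.app (R.obj (TbC.obj X)) ≫ φa.hom.app (TbC.obj X) := by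
        erw [← μ_nat]; simp only [Category.assoc]; rfl
      _ = TaD.map (ψD.inv.app (TbD.obj (R.obj X)) ≫ TaD.map (TbD.μ.app (R.obj X)) ≫
          TaD.map (φb.hom.app X) ≫ φa.hom.app (TbC.obj X)) ≫
            φa.hom.app (TaC.obj (TbC.obj X)) ≫ R.map (TaC.μ.app (TbC.obj X)) := by
        rw [hφaμ]; erw [TaD.map_comp, TaD.map_comp, TaD.map_comp]
        simp only [Category.assoc]
      _ = TaD.map (TbD.map (TaD.map (φb.hom.app X) ≫ φa.hom.app (TbC.obj X))) ≫
          TaD.map (φb.hom.app (TaC.obj (TbC.obj X))) ≫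
          (TaD.map (R.map (ψC.inv.app (TbC.obj X) ≫ TaC.map (TbC.μ.app X))) ≫
            φa.hom.app (TaC.obj (TbC.obj X))) ≫ R.map (TaC.μ.app (TbC.obj X)) := by
        rw [interchange]
        simp only [Functor.map_comp, Category.assoc]
      _ = _ := by
        erw [φa_nat]
        simp only [Functor.map_comp, Category.assoc]
end

section
/- Let A and B be frames, let g : B → A be a frame homomorphism, and let p : A → B be a monotone map. Then the following are equivalent: (1) p(a₁ ⊓ (a₂ ⊔ g b)) = (p a₁ ⊓ b) ⊔ p(a₁ ⊓ a₂) for all a₁, a₂ ∈ A and all b ∈ B; (2) both p a ⊓ b ≤ p(a ⊓ g b) for all a ∈ A, b ∈ B, and p(a ⊔ g b) ≤ p a ⊔ b for all a ∈ A, b ∈ B. -/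
/-!
STATEMENT 5: For frames `A`, `B`, a frame homomorphism `g : B → A` and a monotone map
`p : A → B`, the defining equation of a weak triquotient assignment is equivalent to
the conjunction of the two inequalities.
-/

theorem stmt5 {A B : Type*} [Order.Frame A] [Order.Frame B]
    (g : FrameHom B A) (p : A →o B) :
    (∀ (a₁ a₂ : A) (b : B), p (a₁ ⊓ (a₂ ⊔ g b)) = (p a₁ ⊓ b) ⊔ p (a₁ ⊓ a₂)) ↔
      ((∀ (a : A) (b : B), p a ⊓ b ≤ p (a ⊓ g b)) ∧
        (∀ (a : A) (b : B), p (a ⊔ g b) ≤ p a ⊔ b)) := by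
  constructor
  · intro h
    refine ⟨fun a b => ?_, fun a b => ?_⟩
    · have key := h a ⊥ b
      rw [bot_sup_eq] at key
      exact key ▸ le_sup_left
    · have key := h ⊤ a b
      rw [top_inf_eq, top_inf_eq] at key
      exact key.le.trans (sup_le (inf_le_right.trans le_sup_right) le_sup_left)
  · rintro ⟨h_inf, h_sup⟩ a₁ a₂ b
    apply le_antisymm
    · have h_le : p (a₁ ⊓ (a₂ ⊔ g b)) ≤ p (a₁ ⊓ a₂) ⊔ b := by
        refine (p.monotone ?_).trans (h_sup (a₁ ⊓ a₂) b)
        rw [inf_sup_left]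
        exact sup_le_sup_left inf_le_right _
      calc p (a₁ ⊓ (a₂ ⊔ g b)) ≤ p a₁ ⊓ (b ⊔ p (a₁ ⊓ a₂)) :=
            le_inf (p.monotone inf_le_left) (h_le.trans_eq (sup_comm _ _))
        _ = (p a₁ ⊓ b) ⊔ (p a₁ ⊓ p (a₁ ⊓ a₂)) := inf_sup_left _ _ _
        _ ≤ (p a₁ ⊓ b) ⊔ p (a₁ ⊓ a₂) := sup_le_sup_left inf_le_right _
    · exact sup_le ((h_inf a₁ b).trans (p.monotone (inf_le_inf_left _ le_sup_right)))
        (p.monotone (inf_le_inf_left _ le_sup_left))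
end

section
/- Let A and B be frames, let g : B → A be a frame homomorphism, and let e : A → B be a map forming a Galois connection with g (that is, e a ≤ b if and only if a ≤ g b, for all a ∈ A, b ∈ B). Then e satisfies the Frobenius identity e(a ⊓ g b) = e a ⊓ b for all a ∈ A and b ∈ B if and only if e is a weak triquotient assignment with respect to g, i.e. e(a₁ ⊓ (a₂ ⊔ g b)) = (e a₁ ⊓ b) ⊔ e(a₁ ⊓ a₂) for all a₁, a₂ ∈ A and b ∈ B. -/
/-!
STATEMENT 6: For frames `A`, `B`, a frame homomorphism `g : B → A` and a map `e : A → B`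
forming a Galois connection with `g`, the Frobenius identity holds for `e` if and only if
`e` is a weak triquotient assignment with respect to `g`.
-/

theorem stmt6 {A B : Type*} [Order.Frame A] [Order.Frame B]
    (g : FrameHom B A) (e : A → B)
    (gc : ∀ (a : A) (b : B), e a ≤ b ↔ a ≤ g b) :
    (∀ (a : A) (b : B), e (a ⊓ g b) = e a ⊓ b) ↔
      (∀ (a₁ a₂ : A) (b : B), e (a₁ ⊓ (a₂ ⊔ g b)) = (e a₁ ⊓ b) ⊔ e (a₁ ⊓ a₂)) := by
  have hgc : GaloisConnection e g := gc
  constructor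
  · intro h a₁ a₂ b
    rw [inf_sup_left, hgc.l_sup, h, sup_comm]
  · intro h a b
    simpa [hgc.l_bot] using h a ⊥ b
end

section
/- Let B be a type. Define maps q, q' : Set B → Set (B × B) × Prop, where Set (B × B) × Prop is ordered componentwise (subsets by inclusion, Prop by implication), by q(I) = (I ×ˢ I, True) and q'(I) = ({(i, i) | i ∈ I}, I.Nonempty). Then: (1) q and q' both preserve suprema of nonempty directed families of subsets of B (i.e. they are dcpo homomorphisms); and (2) for every I : Set B, q(I) = q'(I) if and only if I = {b} for some b ∈ B; consequently the map b ↦ {b} is a bijection from B onto the equalizer {I : Set B | q(I) = q'(I)}. -/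
/-!
STATEMENT 7: For a type `B`, the maps `q, q' : Set B → Set (B × B) × Prop` defined by
`q I = (I ×ˢ I, True)` and `q' I = ({(i, i) | i ∈ I}, I.Nonempty)` are dcpo homomorphisms
(preserve suprema of nonempty directed families), and `B` is (via `b ↦ {b}`) the equalizer
of `q` and `q'`.
-/

/-- The first dcpo homomorphism `P B → P (B × B) × Ω` of the paper's equalizer lemma. -/
def eqlzrQ (B : Type*) : Set B → Set (B × B) × Prop :=
  fun I => (I ×ˢ I, True)

/-- The second dcpo homomorphism `P B → P (B × B) × Ω` of the paper's equalizer lemma. -/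
def eqlzrQ' (B : Type*) : Set B → Set (B × B) × Prop :=
  fun I => ({p : B × B | p.1 = p.2 ∧ p.1 ∈ I}, I.Nonempty)

theorem eqlzrQ_iSup_of_directed {B : Type*} {ι : Type*} [Nonempty ι] {F : ι → Set B}
    (hF : Directed (· ≤ ·) F) : eqlzrQ B (⨆ i, F i) = ⨆ i, eqlzrQ B (F i) := by
  refine Prod.ext ?_ ?_
  · rw [Prod.fst_iSup]
    ext ⟨x, y⟩
    simp only [eqlzrQ, Set.iSup_eq_iUnion, Set.mem_prod, Set.mem_iUnion]
    constructor
    · rintro ⟨⟨i, hi⟩, ⟨j, hj⟩⟩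
      obtain ⟨k, hik, hjk⟩ := hF i j
      exact ⟨k, hik hi, hjk hj⟩
    · rintro ⟨i, hx, hy⟩
      exact ⟨⟨i, hx⟩, ⟨i, hy⟩⟩
  · rw [Prod.snd_iSup]
    simp [eqlzrQ]

theorem eqlzrQ'_iSup {B : Type*} {ι : Type*} (F : ι → Set B) :
    eqlzrQ' B (⨆ i, F i) = ⨆ i, eqlzrQ' B (F i) := by
  refine Prod.ext ?_ ?_
  · rw [Prod.fst_iSup]
    ext ⟨x, y⟩
    simp [eqlzrQ']
  · rw [Prod.snd_iSup]
    simp [eqlzrQ']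

theorem eqlzrQ_eq_eqlzrQ'_iff {B : Type*} {I : Set B} :
    eqlzrQ B I = eqlzrQ' B I ↔ ∃ b : B, I = {b} := by
  constructor
  · intro h
    obtain ⟨hprod, hne⟩ := Prod.ext_iff.mp h
    obtain ⟨b, hb⟩ : I.Nonempty := hne.mp trivial
    refine ⟨b, Set.eq_singleton_iff_unique_mem.mpr ⟨hb, fun x hx => ?_⟩⟩
    have hmem : (x, b) ∈ (eqlzrQ B I).1 := ⟨hx, hb⟩
    rw [hprod] at hmem
    exact hmem.1
  · rintro ⟨b, rfl⟩
    refine Prod.ext ?_ ?_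
    · ext ⟨x, y⟩
      simp only [eqlzrQ, eqlzrQ', Set.mem_prod, Set.mem_singleton_iff, Set.mem_ofPred_eq]
      grind
    · simp [eqlzrQ, eqlzrQ']

theorem stmt7 (B : Type*) :
    -- (1) `q` and `q'` preserve suprema of nonempty directed families
    (∀ (ι : Type*) [Nonempty ι] (F : ι → Set B), Directed (· ≤ ·) F →
      eqlzrQ B (⨆ i, F i) = ⨆ i, eqlzrQ B (F i)) ∧
    (∀ (ι : Type*) [Nonempty ι] (F : ι → Set B), Directed (· ≤ ·) F →
      eqlzrQ' B (⨆ i, F i) = ⨆ i, eqlzrQ' B (F i)) ∧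
    -- (2) the equalizer of `q` and `q'` consists exactly of the singletons
    (∀ I : Set B, eqlzrQ B I = eqlzrQ' B I ↔ ∃ b : B, I = {b}) ∧
    -- consequently `b ↦ {b}` is a bijection from `B` onto the equalizer
    Set.BijOn (fun b : B => ({b} : Set B)) Set.univ {I : Set B | eqlzrQ B I = eqlzrQ' B I} := by
  refine ⟨fun _ _ _ hF => eqlzrQ_iSup_of_directed hF, fun _ _ F _ => eqlzrQ'_iSup F,
    fun _ => eqlzrQ_eq_eqlzrQ'_iff, fun b _ => eqlzrQ_eq_eqlzrQ'_iff.mpr ⟨b, rfl⟩,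
    Set.singleton_injective.injOn, fun I hI => ?_⟩
  obtain ⟨b, rfl⟩ := eqlzrQ_eq_eqlzrQ'_iff.mp hI
  exact ⟨b, trivial, rfl⟩
end
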